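/- arXiv:2012.13251 — 2 statements merged into one kernel-verified Lean document; each statement's English description precedes it below -/
import Mathlib

section
/- Assume F is continuous and (x^k) is an Algorithm-2.1 sequence with F(x^k) ≠ 0 for all k. Then either there exists an infinite set K₁ ⊆ ℕ such that ‖F(x^k)‖ → 0 along K₁, or there exists an infinite set K₂ ⊆ ℕ such that α_k → 0 along K₂. -/
/-!
The descent condition reads `u (k + 1) ≤ max_{j < M} u (k - j) + η k - δ k` with `u k = f (x k) ≥ 0`
and `δ k = γ α_k² f (x k)`. If `δ` stayed away from `0`, it would eventually exceed `η` by some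
`e > 0`; then `u k + (e / M) k` never rises above its earlier values, hence is bounded, and
`u k → -∞`, which is absurd. So `δ` has `0` as a cluster point, hence so does `α_k ‖F (x k)‖`, and
therefore one of the two factors.
-/

open Filter Topology

lemma bddAbove_range_of_eventually_exists_le {β : Type*} [Preorder β] [Nonempty β]
    [IsDirectedOrder β] {w : ℕ → β} (hw : ∀ᶠ k in atTop, ∃ i ≤ k, w (k + 1) ≤ w i) :
    BddAbove (Set.range w) := by
  obtain ⟨N, hN⟩ := eventually_atTop.mp hw
  obtain ⟨B, hB⟩ := ((Set.finite_Iic N).image w).bddAbove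
  refine ⟨B, Set.forall_mem_range.mpr fun k => ?_⟩
  induction k using Nat.strong_induction_on with
  | _ k ih =>
    rcases le_or_gt k N with hk | hk
    · exact hB (Set.mem_image_of_mem w hk)
    · obtain ⟨l, rfl⟩ := Nat.exists_eq_succ_of_ne_zero (Nat.ne_zero_of_lt hk)
      obtain ⟨i, hil, hi⟩ := hN l (Nat.le_of_lt_succ hk)
      exact hi.trans (ih i (Nat.lt_succ_of_le hil))

lemma tendsto_atBot_of_eventually_window_decrease {𝕜 : Type*} [Field 𝕜] [LinearOrder 𝕜]
    [IsStrictOrderedRing 𝕜] [Archimedean 𝕜] {u : ℕ → 𝕜} {M : ℕ} {e : 𝕜} (he : 0 < e)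
    (hu : ∀ᶠ k in atTop, ∃ j < M, u (k + 1) + e ≤ u (k - j)) : Tendsto u atTop atBot := by
  obtain ⟨-, j₀, hj₀, -⟩ := hu.exists
  have hM : (0 : 𝕜) < M := Nat.cast_pos.mpr (Nat.zero_lt_of_lt hj₀)
  have hc : 0 < e / M := div_pos he hM
  obtain ⟨B, hB⟩ : BddAbove (Set.range fun k : ℕ => u k + e / M * k) := by
    refine bddAbove_range_of_eventually_exists_le (hu.mono fun k ⟨j, hj, hle⟩ => ?_)
    refine ⟨k - j, Nat.sub_le k j, ?_⟩
    have hindex : ((k + 1 : ℕ) : 𝕜) ≤ (k - j : ℕ) + M := by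
      exact_mod_cast (by omega : k + 1 ≤ k - j + M)
    calc u (k + 1) + e / M * (k + 1 : ℕ)
        ≤ u (k + 1) + e / M * ((k - j : ℕ) + M) := by gcongr
      _ = u (k + 1) + e + e / M * (k - j : ℕ) := by field_simp; ring
      _ ≤ u (k - j) + e / M * (k - j : ℕ) := by gcongr
  have hline : Tendsto (fun k : ℕ => B - e / M * k) atTop atBot := by
    simpa only [sub_eq_add_neg, Function.comp_def] using tendsto_atBot_add_const_left _ B
      (tendsto_neg_atTop_atBot.comp (tendsto_natCast_atTop_atTop.const_mul_atTop hc))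
  exact tendsto_atBot_mono (fun k => le_sub_iff_add_le.mpr (hB (Set.mem_range_self k))) hline

lemma mapClusterPt_zero_iff_frequently_norm_lt {ι E : Type*} [SeminormedAddCommGroup E]
    {l : Filter ι} {u : ι → E} :
    MapClusterPt 0 l u ↔ ∀ ε > 0, ∃ᶠ i in l, ‖u i‖ < ε := by
  simp only [Metric.nhds_basis_ball.mapClusterPt_iff_frequently, mem_ball_zero_iff]

lemma mapClusterPt_zero_or_of_norm_mul_norm {ι E G : Type*} [SeminormedAddCommGroup E]
    [SeminormedAddCommGroup G] {l : Filter ι} {u : ι → E} {v : ι → G}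
    (h : MapClusterPt 0 l fun i => ‖u i‖ * ‖v i‖) :
    MapClusterPt 0 l u ∨ MapClusterPt 0 l v := by
  contrapose! h
  simp only [mapClusterPt_zero_iff_frequently_norm_lt, not_forall, not_frequently, not_lt,
    norm_mul, norm_norm] at h ⊢
  obtain ⟨⟨a, ha, hua⟩, ⟨b, hb, hvb⟩⟩ := h
  refine ⟨a * b, mul_pos ha hb, ?_⟩
  filter_upwards [hua, hvb] with i hai hbi
  gcongr

lemma mapClusterPt_zero_of_nonmonotone_descent {u η δ : ℕ → ℝ} {M : ℕ}
    (hu : BddBelow (Set.range u)) (hη : Tendsto η atTop (𝓝 0)) (hδ : ∀ k, 0 ≤ δ k)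
    (hdescent : ∀ k, ∃ j < M, u (k + 1) ≤ u (k - j) + η k - δ k) :
    MapClusterPt 0 atTop δ := by
  refine mapClusterPt_zero_iff_frequently_norm_lt.mpr fun ε hε hδε => ?_
  have hdecrease : ∀ᶠ k in atTop, ∃ j < M, u (k + 1) + ε / 2 ≤ u (k - j) := by
    filter_upwards [hδε, hη.eventually_lt_const (half_pos hε)] with k hδk hηk
    obtain ⟨j, hj, hle⟩ := hdescent k
    rw [Real.norm_of_nonneg (hδ k), not_lt] at hδk
    exact ⟨j, hj, by linarith⟩
  exact not_bddBelow_of_tendsto_atBot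
    (tendsto_atBot_of_eventually_window_decrease (half_pos hε) hdecrease) hu

theorem secant_accel_stmt1_general {X E : Type*} [SeminormedAddCommGroup E] (F : X → E)
    {γ : ℝ} {M : ℕ} {η : ℕ → ℝ} (hγ : 0 < γ) (hM : M ≠ 0) (hη : Tendsto η atTop (𝓝 0))
    {x : ℕ → X} {α : ℕ → ℝ} {f : X → ℝ} (hf : ∀ y, f y = (1 / 2) * ‖F y‖ ^ 2)
    (hdescent : ∀ k, f (x (k + 1)) ≤
      (Finset.range M).sup' (Finset.nonempty_range_iff.mpr hM)
        (fun j => f (x (k - j))) + η k - γ * (α k) ^ 2 * f (x k)) :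
    (∃ φ : ℕ → ℕ, StrictMono φ ∧ Tendsto (fun j => ‖F (x (φ j))‖) atTop (𝓝 0)) ∨
    (∃ φ : ℕ → ℕ, StrictMono φ ∧ Tendsto (fun j => α (φ j)) atTop (𝓝 0)) := by
  have hf0 (y : X) : 0 ≤ f y := by rw [hf]; positivity
  have hδ : MapClusterPt 0 atTop fun k => γ * α k ^ 2 * f (x k) := by
    refine mapClusterPt_zero_of_nonmonotone_descent (u := fun k => f (x k)) (M := M)
      ⟨0, Set.forall_mem_range.mpr fun k => hf0 (x k)⟩ hη
      (fun k => mul_nonneg (by positivity) (hf0 (x k))) fun k => ?_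
    obtain ⟨j, hj, hmax⟩ := Finset.exists_mem_eq_sup'
      (Finset.nonempty_range_iff.mpr hM) fun j => f (x (k - j))
    exact ⟨j, Finset.mem_range.mp hj, hmax ▸ hdescent k⟩
  have hprod : MapClusterPt 0 atTop fun k => ‖F (x k)‖ * ‖α k‖ := by
    have hsqrt : Tendsto (fun t : ℝ => √(2 / γ * t)) (𝓝 0) (𝓝 0) :=
      Continuous.tendsto' (by fun_prop) 0 0 (by simp only [mul_zero, Real.sqrt_zero])
    have hnorm (k : ℕ) : √(2 / γ * (γ * α k ^ 2 * f (x k))) = ‖F (x k)‖ * ‖α k‖ := by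
      rw [← Real.sqrt_sq (by positivity : 0 ≤ ‖F (x k)‖ * ‖α k‖), hf, mul_pow, Real.norm_eq_abs,
        sq_abs]
      congr 1
      field_simp
    simpa only [Function.comp_def, hnorm] using hδ.tendsto_comp hsqrt
  refine (mapClusterPt_zero_or_of_norm_mul_norm hprod).imp (fun hF => ?_)
    fun hα => hα.tendsto_subseq
  obtain ⟨φ, hφ, hlim⟩ := hF.tendsto_subseq
  exact ⟨φ, hφ, tendsto_zero_iff_norm_tendsto_zero.mp hlim⟩

/-- Lemma 3.1, dichotomy part: if `F` is continuous and `(x^k)` is an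
Algorithm-2.1 sequence with `F(x^k) ≠ 0` for all `k`, then either `‖F(x^k)‖ → 0` along
some infinite subsequence, or `α_k → 0` along some infinite subsequence. -/
theorem secant_accel_stmt1 {n : ℕ}
    (F : EuclideanSpace ℝ (Fin n) → EuclideanSpace ℝ (Fin n))
    (hF : Continuous F)
    (γ σmin σmax : ℝ) (M : ℕ) (η : ℕ → ℝ)
    (hγ0 : 0 < γ) (hγ1 : γ < 1)
    (hσmin : 0 < σmin) (hσ : σmin ≤ σmax)
    (hM : 1 ≤ M)
    (hη : ∀ k, 0 < η k) (hη0 : Tendsto η atTop (𝓝 0))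
    (x v d : ℕ → EuclideanSpace ℝ (Fin n)) (σ α : ℕ → ℝ)
    (f : EuclideanSpace ℝ (Fin n) → ℝ)
    (hf : ∀ y, f y = (1 / 2) * ‖F y‖ ^ 2)
    (hv : ∀ k, ‖v k‖ = ‖F (x k)‖)
    (hσk : ∀ k, |σ k| ∈ Set.Icc σmin σmax)
    (hd : ∀ k, d k = σ k • v k ∨ d k = -(σ k • v k))
    (hα : ∀ k, α k ∈ Set.Ioc (0 : ℝ) 1)
    (harmijo : ∀ k, f (x k + α k • d k) ≤
      (Finset.range M).sup' (Finset.nonempty_range_iff.mpr (by omega))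
        (fun j => f (x (k - j))) + η k - γ * (α k) ^ 2 * f (x k))
    (hnext : ∀ k, f (x (k + 1)) ≤ f (x k + α k • d k))
    (hFne : ∀ k, F (x k) ≠ 0) :
    (∃ φ : ℕ → ℕ, StrictMono φ ∧ Tendsto (fun j => ‖F (x (φ j))‖) atTop (𝓝 0)) ∨
    (∃ φ : ℕ → ℕ, StrictMono φ ∧ Tendsto (fun j => α (φ j)) atTop (𝓝 0)) := by
  exact secant_accel_stmt1_general F hγ0 (Nat.one_le_iff_ne_zero.mp hM) hη0 hf fun k =>
    (hnext k).trans (harmijo k)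
end

section
/- Let F : ℝⁿ → ℝⁿ be differentiable with Jacobian J Lipschitz continuous on an open convex set containing all terms of a sequence (x^k). Define s^k = x^{k+1} − x^k and y^k = F(x^{k+1}) − F(x^k), and suppose for all k ≥ k₀: s^k ≠ 0, (s^{k−1})ᵀ y^{k−1} ≠ 0, and x^{k+1} = x^k − (1/κ_k) F(x^k) where κ_k = (s^{k−1})ᵀ y^{k−1} / ‖s^{k−1}‖². Assume x^k → x_* with J(x_*) invertible, and s^k/‖s^k‖ → s for some s ∈ ℝⁿ. Then the Dennis–Moré condition holds: (κ_k s^k − J(x_*) s^k) / ‖s^k‖ → 0 as k → ∞. -/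
/-!
Write `dₖ = sₖ / ‖sₖ‖`, let `e` be the limit of `dₖ`, and put `A = J(x_*)`. The mean value
inequality gives `yₖ / ‖sₖ‖ → A e`, hence `κₖ → c := ⟪e, A e⟫`. The iteration says
`F(xₖ) = -κₖ sₖ`, so `yₖ = κₖ sₖ - κₖ₊₁ sₖ₊₁`; dividing by `‖sₖ‖` exhibits `c e - A e` as a limit of
multiples of `dₖ₊₁`, hence as a multiple of `e`. It is also orthogonal to the unit vector `e`, so
`A e = c e`, and `κₖ dₖ - A dₖ → c e - A e = 0`.

The point `x_*` may lie on the boundary of `U`. There uniform continuity of `J` on `U` still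
provides a limit of `J` along `U`, and this limit is the derivative at `x_*` because an open convex
set has unique derivatives on its closure.
-/

open Filter Topology
open scoped RealInnerProductSpace

section Derivative

variable {E G : Type*} [NormedAddCommGroup E] [NormedSpace ℝ E] [NormedAddCommGroup G]
  [NormedSpace ℝ G] {F : E → G} {U : Set E} {A : E →L[ℝ] G} {p : E}

lemma tendsto_fderiv_nhdsWithin_of_uniformContinuousOn [CompleteSpace G]
    (hUopen : IsOpen U) (hUconv : Convex ℝ U) (hF : DifferentiableOn ℝ F U)
    (hcont : ∀ z ∈ closure U, ContinuousWithinAt F U z)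
    (hJ : UniformContinuousOn (fderiv ℝ F) U)
    (hp : p ∈ closure U) (hA : HasFDerivWithinAt F A U p) :
    Tendsto (fderiv ℝ F) (𝓝[U] p) (𝓝 A) := by
  have : (𝓝[U] p).NeBot := mem_closure_iff_nhdsWithin_neBot.mp hp
  have hcauchy : Cauchy (𝓝[U] p) := cauchy_nhds.mono nhdsWithin_le_nhds
  obtain ⟨B, hB⟩ : ∃ B, Tendsto (fderiv ℝ F) (𝓝[U] p) (𝓝 B) :=
    cauchy_iff_exists_le_nhds.mp (hcauchy.map_of_le hJ inf_le_right)
  have hderiv : HasFDerivWithinAt F B U p :=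
    (hasFDerivWithinAt_closure_of_tendsto_fderiv hF hUconv hUopen hcont hB).mono subset_closure
  have huniq : UniqueDiffWithinAt ℝ U p :=
    uniqueDiffWithinAt_convex hUconv
      (by rw [hUopen.interior_eq]; exact closure_nonempty_iff.mp ⟨p, hp⟩) hp
  rwa [huniq.eq hA hderiv]

lemma isLittleO_sub_sub_of_tendsto_fderivWithin {J : E → E →L[ℝ] G} (hU : Convex ℝ U)
    (hF : ∀ z ∈ U, HasFDerivWithinAt F (J z) U z) (hJ : Tendsto J (𝓝[U] p) (𝓝 A))
    {ι : Type*} {l : Filter ι} {a b : ι → E}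
    (ha : Tendsto a l (𝓝[U] p)) (hb : Tendsto b l (𝓝[U] p)) :
    (fun i => F (b i) - F (a i) - A (b i - a i)) =o[l] fun i => b i - a i := by
  rw [Asymptotics.isLittleO_iff]
  intro ε hε
  obtain ⟨δ, hδ, hball⟩ :=
    Metric.mem_nhdsWithin_iff.mp (hJ (Metric.closedBall_mem_nhds A hε))
  have hnhds : Metric.ball p δ ∩ U ∈ 𝓝[U] p :=
    inter_mem (mem_nhdsWithin_of_mem_nhds (Metric.ball_mem_nhds p hδ)) self_mem_nhdsWithin
  filter_upwards [ha hnhds, hb hnhds] with i hai hbi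
  exact ((convex_ball p δ).inter hU).norm_image_sub_le_of_norm_hasFDerivWithin_le'
    (fun z hz => (hF z hz.2).mono Set.inter_subset_right)
    (fun z hz => mem_closedBall_iff_norm.mp (hball hz)) hai hbi

end Derivative

section Directions

variable {ι E G : Type*} [NormedAddCommGroup E] [NormedAddCommGroup G] [NormedSpace ℝ G]
  {l : Filter ι} {s : ι → E} {e : E}

lemma norm_eq_one_of_tendsto_inv_norm_smul [NormedSpace ℝ E] [l.NeBot]
    (hs : ∀ᶠ i in l, s i ≠ 0) (he : Tendsto (fun i => ‖s i‖⁻¹ • s i) l (𝓝 e)) : ‖e‖ = 1 :=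
  tendsto_nhds_unique he.norm <| tendsto_const_nhds.congr' <|
    hs.mono fun _ hi => (NormedSpace.norm_normalize_eq_one_iff.mpr hi).symm

lemma tendsto_inv_norm_smul_of_isLittleO [NormedSpace ℝ E] {y : ι → G} {A : E →L[ℝ] G}
    (hy : (fun i => y i - A (s i)) =o[l] s)
    (he : Tendsto (fun i => ‖s i‖⁻¹ • s i) l (𝓝 e)) :
    Tendsto (fun i => ‖s i‖⁻¹ • y i) l (𝓝 (A e)) := by
  have hlim := hy.norm_right.tendsto_inv_smul_nhds_zero.add ((A.continuous.tendsto e).comp he)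
  rw [zero_add] at hlim
  refine hlim.congr fun i => ?_
  rw [Function.comp_apply, map_smul, ← smul_add, sub_add_cancel]

variable [InnerProductSpace ℝ E]

lemma tendsto_inner_div_norm_sq {y : ι → E} {z : E}
    (he : Tendsto (fun i => ‖s i‖⁻¹ • s i) l (𝓝 e))
    (hz : Tendsto (fun i => ‖s i‖⁻¹ • y i) l (𝓝 z)) :
    Tendsto (fun i => ⟪s i, y i⟫ / ‖s i‖ ^ 2) l (𝓝 ⟪e, z⟫) := by
  refine (he.inner hz).congr fun i => ?_
  rw [real_inner_smul_left, real_inner_smul_right]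
  ring

lemma norm_sq_smul_eq_inner_smul_of_tendsto [l.NeBot] {v : ι → E} {t : ι → ℝ} {w : E}
    (hv : Tendsto v l (𝓝 e)) (hw : Tendsto (fun i => t i • v i) l (𝓝 w)) :
    ‖e‖ ^ 2 • w = ⟪e, w⟫ • e := by
  refine tendsto_nhds_unique ((hv.norm.pow 2).smul hw) (((hv.inner hw).smul hv).congr fun i => ?_)
  rw [real_inner_smul_right, real_inner_self_eq_norm_sq, smul_smul, mul_comm]

end Directions

section SpectralResidual

variable {E : Type*} [NormedAddCommGroup E] [InnerProductSpace ℝ E]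

lemma eq_inner_smul_of_tendsto_of_eq_smul_sub_smul {s y : ℕ → E} {κ : ℕ → ℝ} {e z : E}
    (hnorm : ‖e‖ = 1) (he : Tendsto (fun k => ‖s k‖⁻¹ • s k) atTop (𝓝 e))
    (hz : Tendsto (fun k => ‖s k‖⁻¹ • y k) atTop (𝓝 z))
    (hκ : Tendsto κ atTop (𝓝 ⟪e, z⟫))
    (hy : ∀ᶠ k in atTop, y k = κ k • s k - κ (k + 1) • s (k + 1)) :
    z = ⟪e, z⟫ • e := by
  have he_succ : Tendsto (fun k => ‖s (k + 1)‖⁻¹ • s (k + 1)) atTop (𝓝 e) :=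
    (tendsto_add_atTop_iff_nat 1).mpr he
  have hlim : Tendsto
      (fun k => (‖s k‖⁻¹ * κ (k + 1) * ‖s (k + 1)‖) • (‖s (k + 1)‖⁻¹ • s (k + 1)))
      atTop (𝓝 (⟪e, z⟫ • e - z)) := by
    refine ((hκ.smul he).sub hz).congr' ?_
    filter_upwards [hy] with k hk
    have hpolar : ‖s (k + 1)‖ • ‖s (k + 1)‖⁻¹ • s (k + 1) = s (k + 1) :=
      NormedSpace.norm_smul_normalize _
    rw [mul_smul _ ‖s (k + 1)‖, hpolar, hk]
    module
  have horth : ⟪e, ⟪e, z⟫ • e - z⟫ = 0 := by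
    rw [inner_sub_right, real_inner_smul_right, real_inner_self_eq_norm_sq, hnorm]
    ring
  have hzero := norm_sq_smul_eq_inner_smul_of_tendsto he_succ hlim
  rw [horth, hnorm, one_pow, one_smul, zero_smul] at hzero
  exact (sub_eq_zero.mp hzero).symm

lemma tendsto_inv_norm_smul_sub_of_isLittleO {s y : ℕ → E} {κ : ℕ → ℝ} {A : E →L[ℝ] E} {e : E}
    (hs : ∀ᶠ k in atTop, s k ≠ 0)
    (hsecant : (fun k => y k - A (s k)) =o[atTop] s)
    (hκ : ∀ᶠ k in atTop, κ (k + 1) = ⟪s k, y k⟫ / ‖s k‖ ^ 2)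
    (hy : ∀ᶠ k in atTop, y k = κ k • s k - κ (k + 1) • s (k + 1))
    (he : Tendsto (fun k => ‖s k‖⁻¹ • s k) atTop (𝓝 e)) :
    Tendsto (fun k => ‖s k‖⁻¹ • (κ k • s k - A (s k))) atTop (𝓝 0) := by
  have hy_lim : Tendsto (fun k => ‖s k‖⁻¹ • y k) atTop (𝓝 (A e)) :=
    tendsto_inv_norm_smul_of_isLittleO hsecant he
  have hκ_lim : Tendsto κ atTop (𝓝 ⟪e, A e⟫) :=
    (tendsto_add_atTop_iff_nat 1).mp <| (tendsto_inner_div_norm_sq he hy_lim).congr' <|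
      hκ.mono fun _ hk => hk.symm
  have heigen : A e = ⟪e, A e⟫ • e :=
    eq_inner_smul_of_tendsto_of_eq_smul_sub_smul
      (norm_eq_one_of_tendsto_inv_norm_smul hs he) he hy_lim hκ_lim hy
  have hlim := (hκ_lim.smul he).sub ((A.continuous.tendsto e).comp he)
  rw [← heigen, sub_self] at hlim
  refine hlim.congr fun k => ?_
  rw [Function.comp_apply, map_smul, smul_sub, smul_comm]

lemma eq_neg_smul_sub_of_eq_sub_inv_smul {a b r : E} {κ : ℝ} (hκ : κ ≠ 0)
    (hb : b = a - κ⁻¹ • r) : r = -(κ • (b - a)) := by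
  rw [hb, sub_sub_cancel_left, smul_neg, neg_neg, smul_inv_smul₀ hκ]

theorem secant_accel_stmt14_general
    {F : E → E} {J : E → E →L[ℝ] E} {U : Set E} (hU : Convex ℝ U)
    (hF : ∀ z ∈ U, HasFDerivWithinAt F (J z) U z)
    {x s y : ℕ → E} {κ : ℕ → ℝ} {k₀ : ℕ} (hxU : ∀ k, x k ∈ U)
    (hs : ∀ k, s k = x (k + 1) - x k)
    (hy : ∀ k, y k = F (x (k + 1)) - F (x k))
    (hsy : ∀ k, k₀ ≤ k → ⟪s k, y k⟫ ≠ 0)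
    (hκ : ∀ k, k₀ ≤ k → κ (k + 1) = ⟪s k, y k⟫ / ‖s k‖ ^ 2)
    (hiter : ∀ k, k₀ ≤ k → x (k + 1) = x k - (κ k)⁻¹ • F (x k))
    {xstar : E} {A : E →L[ℝ] E} (hJ : Tendsto J (𝓝[U] xstar) (𝓝 A))
    (hx : Tendsto x atTop (𝓝 xstar))
    {e : E} (he : Tendsto (fun k => ‖s k‖⁻¹ • s k) atTop (𝓝 e)) :
    Tendsto (fun k => ‖s k‖⁻¹ • (κ k • s k - A (s k))) atTop (𝓝 0) := by
  have hs_ne : ∀ k, k₀ ≤ k → s k ≠ 0 := fun k hk h => hsy k hk (by rw [h, inner_zero_left])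
  have hxU_lim : Tendsto x atTop (𝓝[U] xstar) :=
    tendsto_nhdsWithin_iff.mpr ⟨hx, .of_forall hxU⟩
  have hsecant : (fun k => y k - A (s k)) =o[atTop] s := by
    rw [funext hs, funext hy]
    exact isLittleO_sub_sub_of_tendsto_fderivWithin hU hF hJ hxU_lim
      ((tendsto_add_atTop_iff_nat 1).mpr hxU_lim)
  have hκ_ne : ∀ k, k₀ < k → κ k ≠ 0
    | k + 1, hk => by
      have hk' : k₀ ≤ k := Nat.le_of_lt_succ hk
      rw [hκ k hk']
      exact div_ne_zero (hsy k hk') (pow_ne_zero 2 (norm_ne_zero_iff.mpr (hs_ne k hk')))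
  have hresidual : ∀ k, k₀ < k → F (x k) = -(κ k • s k) := fun k hk => by
    rw [hs]
    exact eq_neg_smul_sub_of_eq_sub_inv_smul (hκ_ne k hk) (hiter k hk.le)
  have hrec : ∀ᶠ k in atTop, y k = κ k • s k - κ (k + 1) • s (k + 1) := by
    filter_upwards [eventually_gt_atTop k₀] with k hk
    rw [hy, hresidual k hk, hresidual (k + 1) (by lia), neg_sub_neg]
  exact tendsto_inv_norm_smul_sub_of_isLittleO (eventually_atTop.mpr ⟨k₀, hs_ne⟩) hsecant
    (eventually_atTop.mpr ⟨k₀, hκ⟩) hrec he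

end SpectralResidual

/-- for the spectral residual iteration, under the hypotheses of
Theorem 3.5, the Dennis–Moré condition `(κ_k s^k − J(x_*) s^k)/‖s^k‖ → 0` holds. -/
theorem secant_accel_stmt14 {n : ℕ}
    (F : EuclideanSpace ℝ (Fin n) → EuclideanSpace ℝ (Fin n))
    (hF : Differentiable ℝ F)
    (U : Set (EuclideanSpace ℝ (Fin n))) (hUopen : IsOpen U) (hUconv : Convex ℝ U)
    (L : ℝ) (hL : 0 < L)
    (hLip : ∀ a ∈ U, ∀ b ∈ U, ‖fderiv ℝ F a - fderiv ℝ F b‖ ≤ L * ‖a - b‖)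
    (x : ℕ → EuclideanSpace ℝ (Fin n)) (hxU : ∀ k, x k ∈ U)
    (s y : ℕ → EuclideanSpace ℝ (Fin n)) (κ : ℕ → ℝ) (k₀ : ℕ) (hk₀ : 1 ≤ k₀)
    (hs : ∀ k, s k = x (k + 1) - x k)
    (hy : ∀ k, y k = F (x (k + 1)) - F (x k))
    (hsne : ∀ k, k₀ ≤ k → s k ≠ 0)
    (hsy : ∀ k, k₀ ≤ k → ⟪s (k - 1), y (k - 1)⟫ ≠ 0)
    (hκ : ∀ k, k₀ ≤ k → κ k = ⟪s (k - 1), y (k - 1)⟫ / ‖s (k - 1)‖ ^ 2)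
    (hiter : ∀ k, k₀ ≤ k → x (k + 1) = x k - (κ k)⁻¹ • F (x k))
    (xstar : EuclideanSpace ℝ (Fin n))
    (hxlim : Tendsto x atTop (𝓝 xstar))
    (hJinv : Function.Bijective (fderiv ℝ F xstar))
    (sLim : EuclideanSpace ℝ (Fin n))
    (hslim : Tendsto (fun k => (‖s k‖)⁻¹ • s k) atTop (𝓝 sLim)) :
    Tendsto (fun k => (‖s k‖)⁻¹ • (κ k • s k - fderiv ℝ F xstar (s k))) atTop (𝓝 0) := by
  have hJ : Tendsto (fderiv ℝ F) (𝓝[U] xstar) (𝓝 (fderiv ℝ F xstar)) :=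
    tendsto_fderiv_nhdsWithin_of_uniformContinuousOn hUopen hUconv hF.differentiableOn
      (fun _ _ => hF.continuous.continuousWithinAt)
      (LipschitzOnWith.of_dist_le' (K := L) fun a ha b hb => by
        simpa only [dist_eq_norm] using hLip a ha b hb).uniformContinuousOn
      (mem_closure_of_tendsto hxlim (.of_forall hxU)) (hF xstar).hasFDerivAt.hasFDerivWithinAt
  exact secant_accel_stmt14_general hUconv (fun z _ => (hF z).hasFDerivAt.hasFDerivWithinAt) hxU
    hs hy (fun k hk => hsy (k + 1) (by lia)) (fun k hk => hκ (k + 1) (by lia)) hiter hJ hxlim hslim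
end
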